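/- arXiv:1206.3684 — 2 statements merged into one kernel-verified Lean document; each statement's English description precedes it below -/
import Mathlib

section
/- Let 0 < s < 1. For all n, m ∈ ℕ, ∫_{ℝ²} 𝔥_{n,s}(x+iy) · conj(𝔥_{m,s}(x+iy)) · exp(s·x² − y²/s) dx dy = δ_{nm}; that is, the functions 𝔥_{n,s} form an orthonormal family in L²(ℝ², exp(s x² − y²/s) dx dy). -/
open Polynomial MeasureTheory Real

/-- The physicists' Hermite polynomials: `H 0 = 1`, `H (n+1) = 2X * H n - (H n)'`. -/
noncomputable def physHermite : ℕ → Polynomial ℝ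
  | 0 => 1
  | n + 1 => 2 * Polynomial.X * physHermite n - Polynomial.derivative (physHermite n)

/-- The normalization constant `b_n(s) = (π√s/(1−s)) (2(1+s)/(1−s))^n n!`. -/
noncomputable def bn (s : ℝ) (n : ℕ) : ℝ :=
  Real.pi * Real.sqrt s / (1 - s) * (2 * (1 + s) / (1 - s)) ^ n * n.factorial

/-- `𝔥_{n,s}(z) = b_n(s)^{-1/2} e^{-z²/2} H_n(z)`. -/
noncomputable def hns (s : ℝ) (n : ℕ) (z : ℂ) : ℂ :=
  ((Real.sqrt (bn s n) : ℂ))⁻¹ * Complex.exp (-z ^ 2 / 2) *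
    Polynomial.aeval z (physHermite n)

section HnsAux

/-- The Gaussian weight on the plane. -/
noncomputable def gw (a c : ℝ) (v : ℝ × ℝ) : ℂ :=
  (Real.exp (-a * v.1 ^ 2) : ℂ) * (Real.exp (-c * v.2 ^ 2) : ℂ)

lemma int1 (a : ℝ) (ha : 0 < a) (i : ℕ) :
    Integrable (fun x : ℝ => (x : ℂ) ^ i * (Real.exp (-a * x ^ 2) : ℂ)) := by
  have h := integrable_rpow_mul_exp_neg_mul_sq ha (s := (i : ℝ))
    (lt_of_lt_of_le (by norm_num) (Nat.cast_nonneg i))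
  have h2 := h.ofReal (𝕜 := ℂ)
  refine h2.congr (Filter.Eventually.of_forall fun x => ?_)
  simp [Real.rpow_natCast]

lemma ibp1 (a : ℝ) (ha : 0 < a) (i : ℕ) :
    (i : ℂ) * ∫ x : ℝ, (x : ℂ) ^ (i - 1) * (Real.exp (-a * x ^ 2) : ℂ) =
      2 * a * ∫ x : ℝ, (x : ℂ) ^ (i + 1) * (Real.exp (-a * x ^ 2) : ℂ) := by
  have h1 := (int1 a ha (i - 1)).const_mul (i : ℂ)
  have h2 := (int1 a ha (i + 1)).const_mul (2 * a : ℂ)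
  have key := integral_eq_zero_of_hasDerivAt_of_integrable
    (f := fun x : ℝ => (x : ℂ) ^ i * (Real.exp (-a * x ^ 2) : ℂ))
    (f' := fun x : ℝ => (i : ℂ) * ((x : ℂ) ^ (i - 1) * (Real.exp (-a * x ^ 2) : ℂ)) -
      2 * a * ((x : ℂ) ^ (i + 1) * (Real.exp (-a * x ^ 2) : ℂ))) ?_ (h1.sub h2) (int1 a ha i)
  · rw [integral_sub h1 h2, integral_const_mul, integral_const_mul] at key
    exact sub_eq_zero.mp key
  · intro x
    have e1 : HasDerivAt (fun x : ℝ => x ^ i * Real.exp (-a * x ^ 2))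
        (i * x ^ (i - 1) * Real.exp (-a * x ^ 2) +
          x ^ i * (Real.exp (-a * x ^ 2) * (-a * (2 * x)))) x := by
      refine (hasDerivAt_pow i x).mul (HasDerivAt.exp ?_)
      have := (hasDerivAt_pow 2 x).const_mul (-a)
      simpa using this
    have e2 := e1.ofReal_comp
    have e3 : (fun x : ℝ => (x : ℂ) ^ i * (Real.exp (-a * x ^ 2) : ℂ)) =
        fun y : ℝ => ((y ^ i * Real.exp (-a * y ^ 2) : ℝ) : ℂ) := by
      ext y; rw [Complex.ofReal_mul, Complex.ofReal_pow]
    rw [e3]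
    refine e2.congr_deriv ?_
    simp only [Complex.ofReal_mul, Complex.ofReal_add, Complex.ofReal_pow, Complex.ofReal_neg,
      Complex.ofReal_natCast, Complex.ofReal_ofNat]
    ring

/-- Evaluation of a bivariate polynomial at a point of the plane. -/
noncomputable def ev (v : ℝ × ℝ) (A : MvPolynomial (Fin 2) ℂ) : ℂ :=
  MvPolynomial.eval ![(v.1 : ℂ), (v.2 : ℂ)] A

lemma ev_monomial (v : ℝ × ℝ) (u : Fin 2 →₀ ℕ) (r : ℂ) :
    ev v (MvPolynomial.monomial u r) = r * ((v.1 : ℂ) ^ u 0 * (v.2 : ℂ) ^ u 1) := by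
  simp [ev, MvPolynomial.eval_monomial, Finsupp.prod_fintype]

lemma ev_mono_gw (a c : ℝ) (u : Fin 2 →₀ ℕ) (r : ℂ) :
    (fun v => ev v (MvPolynomial.monomial u r) * gw a c v) = fun v : ℝ × ℝ =>
      r * (((v.1 : ℂ) ^ u 0 * (Real.exp (-a * v.1 ^ 2) : ℂ)) *
       ((v.2 : ℂ) ^ u 1 * (Real.exp (-c * v.2 ^ 2) : ℂ))) := by
  ext v
  rw [ev_monomial, gw]; ring

lemma int2 (a c : ℝ) (ha : 0 < a) (hc : 0 < c) (A : MvPolynomial (Fin 2) ℂ) :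
    Integrable (fun v => ev v A * gw a c v) ((volume : Measure ℝ).prod volume) := by
  induction A using MvPolynomial.induction_on' with
  | monomial u r =>
    rw [ev_mono_gw]
    exact ((int1 a ha (u 0)).mul_prod (int1 c hc (u 1))).const_mul r
  | add p q hp hq =>
    refine (hp.add hq).congr (Filter.Eventually.of_forall fun v => ?_)
    simp [ev, add_mul]

/-- The Gaussian functional. -/
noncomputable def Lam (a c : ℝ) (A : MvPolynomial (Fin 2) ℂ) : ℂ :=
  ∫ v, ev v A * gw a c v ∂((volume : Measure ℝ).prod volume)

lemma Lam_add (a c : ℝ) (ha : 0 < a) (hc : 0 < c) (A B : MvPolynomial (Fin 2) ℂ) :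
    Lam a c (A + B) = Lam a c A + Lam a c B := by
  unfold Lam
  rw [← integral_add (int2 a c ha hc A) (int2 a c ha hc B)]
  simp [ev, add_mul]

lemma Lam_C (a c : ℝ) (r : ℂ) (A : MvPolynomial (Fin 2) ℂ) :
    Lam a c (MvPolynomial.C r * A) = r * Lam a c A := by
  unfold Lam
  rw [← integral_const_mul]
  simp [ev, mul_assoc]

lemma Lam_mono (a c : ℝ) (u : Fin 2 →₀ ℕ) (r : ℂ) :
    Lam a c (MvPolynomial.monomial u r) =
      r * ((∫ x : ℝ, (x : ℂ) ^ u 0 * (Real.exp (-a * x ^ 2) : ℂ)) *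
        ∫ x : ℝ, (x : ℂ) ^ u 1 * (Real.exp (-c * x ^ 2) : ℂ)) := by
  unfold Lam
  rw [ev_mono_gw, integral_const_mul]
  congr 1
  exact integral_prod_mul (fun x : ℝ => (x : ℂ) ^ u 0 * (Real.exp (-a * x ^ 2) : ℂ))
    (fun x : ℝ => (x : ℂ) ^ u 1 * (Real.exp (-c * x ^ 2) : ℂ))

lemma ibp_0 (a c : ℝ) (ha : 0 < a) (hc : 0 < c) (A : MvPolynomial (Fin 2) ℂ) :
    Lam a c (MvPolynomial.pderiv 0 A) = 2 * a * Lam a c (MvPolynomial.X 0 * A) := by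
  induction A using MvPolynomial.induction_on' with
  | monomial u r =>
    rw [MvPolynomial.pderiv_monomial, MvPolynomial.X, MvPolynomial.monomial_mul, Lam_mono, Lam_mono]
    have := ibp1 a ha (u 0)
    simp only [Finsupp.coe_tsub, Finsupp.coe_add, Pi.sub_apply, Pi.add_apply,
      Finsupp.single_eq_same, ne_eq, one_ne_zero, not_false_eq_true, Finsupp.single_eq_of_ne,
      tsub_zero, zero_add, one_mul]
    rw [add_comm 1 (u 0)]
    linear_combination r * (∫ x : ℝ, (x : ℂ) ^ u 1 * (Real.exp (-c * x ^ 2) : ℂ)) * this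
  | add p q hp hq =>
    rw [map_add, mul_add, Lam_add a c ha hc, Lam_add a c ha hc, hp, hq]; ring

lemma ibp_1 (a c : ℝ) (ha : 0 < a) (hc : 0 < c) (A : MvPolynomial (Fin 2) ℂ) :
    Lam a c (MvPolynomial.pderiv 1 A) = 2 * c * Lam a c (MvPolynomial.X 1 * A) := by
  induction A using MvPolynomial.induction_on' with
  | monomial u r =>
    rw [MvPolynomial.pderiv_monomial, MvPolynomial.X, MvPolynomial.monomial_mul, Lam_mono, Lam_mono]
    have := ibp1 c hc (u 1)
    simp only [Finsupp.coe_tsub, Finsupp.coe_add, Pi.sub_apply, Pi.add_apply,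
      Finsupp.single_eq_same, ne_eq, zero_ne_one, not_false_eq_true, Finsupp.single_eq_of_ne,
      tsub_zero, zero_add, one_mul]
    rw [add_comm 1 (u 1)]
    linear_combination r * (∫ x : ℝ, (x : ℂ) ^ u 0 * (Real.exp (-a * x ^ 2) : ℂ)) * this
  | add p q hp hq =>
    rw [map_add, mul_add, Lam_add a c ha hc, Lam_add a c ha hc, hp, hq]; ring

/-- `z` (for `t = I`) or its conjugate (for `t = -I`). -/
noncomputable def Zt (t : ℂ) : MvPolynomial (Fin 2) ℂ :=
  MvPolynomial.X 0 + MvPolynomial.C t * MvPolynomial.X 1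

lemma pd0 (t : ℂ) (p : ℝ[X]) : MvPolynomial.pderiv 0 (aeval (Zt t) p) =
    aeval (Zt t) (derivative p) := by
  have := ((MvPolynomial.pderiv (R := ℂ) (0 : Fin 2)).restrictScalars ℝ).map_aeval p (Zt t)
  rw [Derivation.restrictScalars_apply, Derivation.restrictScalars_apply] at this
  rw [this, smul_eq_mul]
  have h : MvPolynomial.pderiv 0 (Zt t) = 1 := by simp [Zt]
  rw [h, mul_one]

lemma pd1 (t : ℂ) (p : ℝ[X]) : MvPolynomial.pderiv 1 (aeval (Zt t) p) =
    MvPolynomial.C t * aeval (Zt t) (derivative p) := by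
  have := ((MvPolynomial.pderiv (R := ℂ) (1 : Fin 2)).restrictScalars ℝ).map_aeval p (Zt t)
  rw [Derivation.restrictScalars_apply, Derivation.restrictScalars_apply] at this
  rw [this, smul_eq_mul]
  have h : MvPolynomial.pderiv 1 (Zt t) = MvPolynomial.C t := by simp [Zt]
  rw [h, mul_comm]

/-- The sesquilinear pairing. -/
noncomputable def LL (a c : ℝ) (p q : ℝ[X]) : ℂ :=
  Lam a c (aeval (Zt Complex.I) p * aeval (Zt (-Complex.I)) q)

lemma LL_1 (a c : ℝ) (ha : 0 < a) (hc : 0 < c) (p q : ℝ[X]) :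
    LL a c (derivative p) q + LL a c p (derivative q) =
      a * (LL a c (X * p) q + LL a c p (X * q)) := by
  have h := ibp_0 a c ha hc (aeval (Zt Complex.I) p * aeval (Zt (-Complex.I)) q)
  rw [Derivation.leibniz, pd0, pd0, Lam_add a c ha hc] at h
  simp only [smul_eq_mul] at h
  unfold LL
  rw [← Lam_add a c ha hc (aeval (Zt Complex.I) (X * p) * _)]
  have e : aeval (Zt Complex.I) (X * p) * aeval (Zt (-Complex.I)) q +
      aeval (Zt Complex.I) p * aeval (Zt (-Complex.I)) (X * q) = MvPolynomial.C 2 *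
      (MvPolynomial.X 0 * (aeval (Zt Complex.I) p * aeval (Zt (-Complex.I)) q)) := by
    simp only [map_mul, aeval_X]
    simp only [Zt, map_neg, map_ofNat]
    ring
  rw [e, Lam_C, mul_comm (aeval (Zt Complex.I) (derivative p))]
  linear_combination h

lemma LL_2 (a c : ℝ) (ha : 0 < a) (hc : 0 < c) (p q : ℝ[X]) :
    LL a c (derivative p) q - LL a c p (derivative q) =
      -c * (LL a c (X * p) q - LL a c p (X * q)) := by
  have h := ibp_1 a c ha hc (aeval (Zt Complex.I) p * aeval (Zt (-Complex.I)) q)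
  rw [Derivation.leibniz, pd1, pd1, Lam_add a c ha hc] at h
  simp only [smul_eq_mul] at h
  rw [mul_left_comm, mul_left_comm (aeval (Zt (-Complex.I)) q), Lam_C, Lam_C] at h
  have e : aeval (Zt Complex.I) (X * p) * aeval (Zt (-Complex.I)) q =
      aeval (Zt Complex.I) p * aeval (Zt (-Complex.I)) (X * q) + MvPolynomial.C (2 * Complex.I) *
      (MvPolynomial.X 1 * (aeval (Zt Complex.I) p * aeval (Zt (-Complex.I)) q)) := by
    simp only [map_mul, aeval_X]
    simp only [Zt, map_neg, map_ofNat]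
    ring
  unfold LL
  rw [e, Lam_add a c ha hc, Lam_C, mul_comm (aeval (Zt Complex.I) (derivative p))]
  linear_combination (-Complex.I) * h - (Lam a c (aeval (Zt Complex.I) p *
    aeval (Zt (-Complex.I)) (derivative q)) - Lam a c (aeval (Zt (-Complex.I)) q *
    aeval (Zt Complex.I) (derivative p))) * Complex.I_mul_I

lemma LL_comb_left (a c : ℝ) (ha : 0 < a) (hc : 0 < c) (p p' q : ℝ[X]) :
    LL a c (2 * X * p - p') q = 2 * LL a c (X * p) q - LL a c p' q := by
  unfold LL
  rw [show aeval (Zt Complex.I) (2 * X * p - p') * aeval (Zt (-Complex.I)) q =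
    MvPolynomial.C 2 * (aeval (Zt Complex.I) (X * p) * aeval (Zt (-Complex.I)) q) +
    MvPolynomial.C (-1) * (aeval (Zt Complex.I) p' * aeval (Zt (-Complex.I)) q) by
      simp only [map_mul, map_sub, map_ofNat, map_neg, map_one]; ring,
    Lam_add a c ha hc, Lam_C, Lam_C]
  ring

lemma LL_comb_right (a c : ℝ) (ha : 0 < a) (hc : 0 < c) (p q' q : ℝ[X]) :
    LL a c p (2 * X * q - q') = 2 * LL a c p (X * q) - LL a c p q' := by
  unfold LL
  rw [show aeval (Zt Complex.I) p * aeval (Zt (-Complex.I)) (2 * X * q - q') =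
    MvPolynomial.C 2 * (aeval (Zt Complex.I) p * aeval (Zt (-Complex.I)) (X * q)) +
    MvPolynomial.C (-1) * (aeval (Zt Complex.I) p * aeval (Zt (-Complex.I)) q') by
      simp only [map_mul, map_sub, map_ofNat, map_neg, map_one]; ring,
    Lam_add a c ha hc, Lam_C, Lam_C]
  ring

lemma LL_smul_right (a c r : ℝ) (p q : ℝ[X]) :
    LL a c p (C r * q) = r * LL a c p q := by
  unfold LL
  rw [← Lam_C]
  congr 1
  simp only [map_mul, aeval_C]
  rw [IsScalarTower.algebraMap_apply ℝ ℂ (MvPolynomial (Fin 2) ℂ)]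
  simp only [MvPolynomial.algebraMap_eq, Complex.coe_algebraMap]
  ring

lemma LL_zero_left (a c : ℝ) (q : ℝ[X]) : LL a c 0 q = 0 := by simp [LL, Lam, ev]
lemma LL_zero_right (a c : ℝ) (q : ℝ[X]) : LL a c q 0 = 0 := by simp [LL, Lam, ev]

lemma raise_left (s : ℝ) (hs0 : 0 < s) (hs1 : s < 1) (p q : ℝ[X]) :
    LL (1 - s) ((1 - s) / s) (2 * X * p - derivative p) q =
      (1 + s) / (1 - s) * LL (1 - s) ((1 - s) / s) p (derivative q) := by
  have ha : 0 < 1 - s := by linarith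
  have hc : 0 < (1 - s) / s := by positivity
  have h1 := LL_1 _ _ ha hc p q
  have h2 := LL_2 _ _ ha hc p q
  rw [LL_comb_left _ _ ha hc]
  generalize LL (1 - s) ((1 - s) / s) (derivative p) q = A at *
  generalize LL (1 - s) ((1 - s) / s) p (derivative q) = B at *
  generalize LL (1 - s) ((1 - s) / s) (X * p) q = D at *
  generalize LL (1 - s) ((1 - s) / s) p (X * q) = E at *
  have n1 : (s : ℂ) ≠ 0 := by exact_mod_cast hs0.ne'
  have n2 : (1 - s : ℂ) ≠ 0 := by exact_mod_cast ha.ne'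
  push_cast at h1 h2
  have h2' : s * (A - B) = -(1 - s) * (D - E) := by
    rw [h2]; field_simp
  field_simp
  linear_combination (-1) * h1 + h2'

lemma raise_right (s : ℝ) (hs0 : 0 < s) (hs1 : s < 1) (p q : ℝ[X]) :
    LL (1 - s) ((1 - s) / s) p (2 * X * q - derivative q) =
      (1 + s) / (1 - s) * LL (1 - s) ((1 - s) / s) (derivative p) q := by
  have ha : 0 < 1 - s := by linarith
  have hc : 0 < (1 - s) / s := by positivity
  have h1 := LL_1 _ _ ha hc p q
  have h2 := LL_2 _ _ ha hc p q
  rw [LL_comb_right _ _ ha hc]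
  generalize LL (1 - s) ((1 - s) / s) (derivative p) q = A at *
  generalize LL (1 - s) ((1 - s) / s) p (derivative q) = B at *
  generalize LL (1 - s) ((1 - s) / s) (X * p) q = D at *
  generalize LL (1 - s) ((1 - s) / s) p (X * q) = E at *
  have n1 : (s : ℂ) ≠ 0 := by exact_mod_cast hs0.ne'
  have n2 : (1 - s : ℂ) ≠ 0 := by exact_mod_cast ha.ne'
  push_cast at h1 h2
  have h2' : s * (A - B) = -(1 - s) * (D - E) := by
    rw [h2]; field_simp
  field_simp
  linear_combination (-1) * h1 - h2'

lemma physHermite_deriv (n : ℕ) : derivative (physHermite (n + 1)) =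
    C (2 * (n + 1 : ℝ)) * physHermite n := by
  have h2 : derivative (2 : ℝ[X]) = 0 := derivative_ofNat (R := ℝ) 2
  have c2 : (C (2 : ℝ) : ℝ[X]) = 2 := map_ofNat C 2
  induction n with
  | zero => simp [physHermite, h2, c2]
  | succ n ih =>
    have e : (C (2 * ((n + 1 : ℕ) + 1 : ℝ)) : ℝ[X]) = C (2 * (n + 1 : ℝ)) + 2 := by
      rw [← c2, ← C_add]; congr 1; push_cast; ring
    rw [e, physHermite.eq_2 (n + 1), derivative_sub, derivative_mul, derivative_mul, h2,
      derivative_X, ih, derivative_C_mul, physHermite.eq_2 n]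
    ring

lemma LL_00 (s : ℝ) (hs0 : 0 < s) (hs1 : s < 1) :
    LL (1 - s) ((1 - s) / s) 1 1 = (Real.pi * Real.sqrt s / (1 - s) : ℝ) := by
  have ha : 0 < 1 - s := by linarith
  have h := Lam_mono (1 - s) ((1 - s) / s) 0 1
  have e : (MvPolynomial.monomial 0 1 : MvPolynomial (Fin 2) ℂ) = 1 := rfl
  rw [LL, map_one, map_one, one_mul, ← e, h]
  simp only [Finsupp.coe_zero, Pi.zero_apply, pow_zero, one_mul]
  rw [integral_complex_ofReal, integral_complex_ofReal, integral_gaussian, integral_gaussian,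
    ← Complex.ofReal_mul, ← Real.sqrt_mul (by positivity)]
  congr 1
  rw [show Real.pi / (1 - s) * (Real.pi / ((1 - s) / s)) = (Real.pi / (1 - s)) ^ 2 * s by
    field_simp, Real.sqrt_mul (by positivity), Real.sqrt_sq (by positivity)]
  ring

lemma LL_HH (s : ℝ) (hs0 : 0 < s) (hs1 : s < 1) (n : ℕ) : ∀ m : ℕ,
    LL (1 - s) ((1 - s) / s) (physHermite n) (physHermite m) =
      if n = m then (bn s n : ℂ) else 0 := by
  induction n with
  | zero =>
    intro m
    cases m with
    | zero =>
      simp only [physHermite, if_true]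
      rw [LL_00 s hs0 hs1]; simp [bn]
    | succ m =>
      rw [physHermite.eq_2 m, raise_right s hs0 hs1]
      simp [physHermite, LL_zero_left]
  | succ n ih =>
    intro m
    rw [physHermite.eq_2 n, raise_left s hs0 hs1]
    cases m with
    | zero => simp [physHermite, LL_zero_right]
    | succ m =>
      rw [physHermite_deriv, LL_smul_right, ih m]
      by_cases h : n = m
      · subst h
        simp only [if_true, bn, pow_succ, Nat.factorial_succ]
        push_cast; ring
      · simp [h]

lemma bn_pos (s : ℝ) (hs0 : 0 < s) (hs1 : s < 1) (n : ℕ) : 0 < bn s n := by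
  have ha : 0 < 1 - s := by linarith
  have := Nat.factorial_pos n
  unfold bn
  positivity

lemma ev_aeval (v : ℝ × ℝ) (t : ℂ) (p : ℝ[X]) :
    ev v (aeval (Zt t) p) = aeval ((v.1 : ℂ) + t * v.2) p := by
  unfold ev
  have := Polynomial.aeval_algHom_apply
    ((MvPolynomial.aeval (R := ℂ) ![(v.1 : ℂ), (v.2 : ℂ)]).restrictScalars ℝ) (Zt t) p
  simp only [AlgHom.restrictScalars_apply, MvPolynomial.aeval_eq_eval] at this
  rw [← MvPolynomial.coe_aeval_eq_eval] 
  simp only [RingHom.coe_coe]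
  rw [← AlgHom.restrictScalars_apply ℝ, ← Polynomial.aeval_algHom_apply]
  congr 1
  simp [Zt]

lemma integrand_eq (s : ℝ) (hs0 : 0 < s) (n m : ℕ) (x y : ℝ) :
    hns s n ((x : ℂ) + y * Complex.I) *
          (starRingEnd ℂ) (hns s m ((x : ℂ) + y * Complex.I)) *
          (Real.exp (s * x ^ 2 - y ^ 2 / s) : ℂ) =
    ((Real.sqrt (bn s n) : ℂ))⁻¹ * ((Real.sqrt (bn s m) : ℂ))⁻¹ *
     (ev (x, y) (aeval (Zt Complex.I) (physHermite n) * aeval (Zt (-Complex.I)) (physHermite m)) *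
      gw (1 - s) ((1 - s) / s) (x, y)) := by
  have hev : ∀ A B, ev (x, y) (A * B) = ev (x, y) A * ev (x, y) B := by intros; simp [ev]
  rw [hev, ev_aeval, ev_aeval]
  have n1 : (s : ℂ) ≠ 0 := by exact_mod_cast hs0.ne'
  have he : Complex.exp (-((x : ℂ) + y * Complex.I) ^ 2 / 2) *
      Complex.exp (-((x : ℂ) + -Complex.I * y) ^ 2 / 2) *
        (Real.exp (s * x ^ 2 - y ^ 2 / s) : ℂ) = gw (1 - s) ((1 - s) / s) (x, y) := by
    simp only [gw, Complex.ofReal_exp, ← Complex.exp_add]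
    congr 1
    push_cast
    field_simp
    linear_combination (-2 * y ^ 2 * s : ℂ) * Complex.I_sq
  have hz : (starRingEnd ℂ) ((x : ℂ) + y * Complex.I) = (x : ℂ) + -Complex.I * y := by
    simp; ring
  rw [← he]
  unfold hns
  rw [map_mul, map_mul, ← Polynomial.aeval_conj, ← Complex.exp_conj, map_inv₀, Complex.conj_ofReal,
    map_div₀, map_neg, map_pow, hz, Complex.conj_ofNat, mul_comm (y : ℂ) Complex.I]
  ring

end HnsAux

theorem hns_orthonormal (s : ℝ) (hs0 : 0 < s) (hs1 : s < 1) (n m : ℕ) :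
    (∫ x : ℝ, ∫ y : ℝ,
        hns s n ((x : ℂ) + y * Complex.I) *
          (starRingEnd ℂ) (hns s m ((x : ℂ) + y * Complex.I)) *
          (Real.exp (s * x ^ 2 - y ^ 2 / s) : ℂ))
      = if n = m then 1 else 0 := by
  have ha : 0 < 1 - s := by linarith
  have hc : 0 < (1 - s) / s := by positivity
  simp_rw [integrand_eq s hs0 n m, integral_const_mul]
  have h := LL_HH s hs0 hs1 n m
  rw [LL, Lam, integral_prod _ (int2 _ _ ha hc _)] at h
  rw [h]
  split_ifs with hnm
  · subst hnm
    have hb := bn_pos s hs0 hs1 n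
    have hq : (Real.sqrt (bn s n) : ℂ) ≠ 0 := by exact_mod_cast (Real.sqrt_pos.mpr hb).ne'
    have hm : (bn s n : ℂ) = (Real.sqrt (bn s n) : ℂ) * (Real.sqrt (bn s n) : ℂ) := by
      rw [← Complex.ofReal_mul, Real.mul_self_sqrt hb.le]
    rw [hm]
    field_simp
  · simp
end

section
/- Let 0 < s < 1. For all z, w ∈ ℂ, the series ∑_{n=0}^∞ b_n(s)^{−1} · H_n(z) · conj(H_n(w)) converges, with sum equal to ((1−s²)/(2πs)) · exp( −((1−s)²/(4s))·(z² + conj(w)²) + ((1−s²)/(2s))·z·conj(w) ). -/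
open Polynomial Real

lemma physHermite_derivative (n : ℕ) :
    derivative (physHermite (n + 1)) = (2 * ((n : ℝ[X]) + 1)) * physHermite n := by
  induction n with
  | zero => simp [physHermite]
  | succ k ih =>
    rw [physHermite, derivative_sub, derivative_mul, ih]
    simp only [derivative_mul, derivative_add, derivative_X, derivative_natCast, derivative_ofNat,
      derivative_one]
    have h2 : physHermite (k + 1) = 2 * X * physHermite k - derivative (physHermite k) := rfl
    push_cast
    linear_combination (-2 * ((k : ℝ[X]) + 1)) * h2

lemma physHermite_rec (n : ℕ) (y : ℂ) :
    aeval y (physHermite (n + 1)) =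
      2 * y * aeval y (physHermite n) - 2 * (n : ℂ) * aeval y (physHermite (n - 1)) := by
  have h2 : aeval y (2 : ℝ[X]) = 2 := map_ofNat _ 2
  cases n with
  | zero => simp [physHermite, h2]
  | succ k =>
    rw [physHermite, physHermite_derivative]
    simp [h2]

lemma integrable_exp_abs (b a d : ℝ) (hb : b < 0) :
    MeasureTheory.Integrable (fun g : ℝ => Real.exp (b * g ^ 2 + a * |g| + d)) := by
  have h1 (a : ℝ) : MeasureTheory.Integrable (fun g : ℝ => Real.exp (b * g ^ 2 + a * g + d)) := by
    have := (integrable_cexp_quadratic' (b := (b : ℂ)) (by simpa using hb) (a : ℂ) (d : ℂ)).norm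
    refine this.congr (Filter.Eventually.of_forall fun g => ?_)
    simp only [Complex.norm_exp]
    congr 1
    have : ((b : ℂ) * (g : ℂ) ^ 2 + a * g + d) = ((b * g ^ 2 + a * g + d : ℝ) : ℂ) := by
      push_cast; rfl
    rw [this, Complex.ofReal_re]
  refine ((h1 a).add (h1 (-a))).mono' (by fun_prop) (Filter.Eventually.of_forall fun g => ?_)
  simp only [Real.norm_eq_abs, Real.abs_exp, Pi.add_apply]
  rcases abs_cases g with h | h <;> rw [h.1]
  · linarith [Real.exp_pos (b * g ^ 2 + -a * g + d)]
  · rw [mul_neg, ← neg_mul]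
    linarith [Real.exp_pos (b * g ^ 2 + a * g + d)]

lemma norm_add_I_mul_le (y : ℂ) (g : ℝ) : ‖y + Complex.I * g‖ ≤ ‖y‖ + |g| := by
  refine (norm_add_le _ _).trans ?_
  simp

lemma integrable_moment (n : ℕ) (y : ℂ) :
    MeasureTheory.Integrable
      (fun g : ℝ => (2 * (y + Complex.I * g)) ^ n * Complex.exp (-(g : ℂ) ^ 2)) := by
  refine ((integrable_exp_abs (-1) 2 (2 * ‖y‖) (by norm_num)).const_mul (n.factorial : ℝ)).mono'
    (by fun_prop) (Filter.Eventually.of_forall fun g => ?_)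
  have h0 : ‖Complex.exp (-(g : ℂ) ^ 2)‖ = Real.exp (-g ^ 2) := by
    rw [Complex.norm_exp]
    norm_cast
  rw [norm_mul, h0, norm_pow, norm_mul]
  have h1 := norm_add_I_mul_le y g
  have h2 := Real.pow_div_factorial_le_exp (x := 2 * (‖y‖ + |g|)) (by positivity) n
  rw [div_le_iff₀ (by positivity)] at h2
  have h3 : (‖(2 : ℂ)‖ * ‖y + Complex.I * g‖) ^ n ≤ (2 * (‖y‖ + |g|)) ^ n := by
    simp only [Complex.norm_ofNat]
    gcongr
  calc _ ≤ (Real.exp (2 * (‖y‖ + |g|)) * n.factorial) * Real.exp (-g ^ 2) := by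
        gcongr
        exact h3.trans h2
    _ = n.factorial * (Real.exp (2 * (‖y‖ + |g|)) * Real.exp (-g ^ 2)) := by ring
    _ = _ := by rw [← Real.exp_add]; ring_nf

lemma moment_rec (n : ℕ) (y : ℂ) :
    ∫ g : ℝ, (2 * (y + Complex.I * g)) ^ (n + 1) * Complex.exp (-(g : ℂ) ^ 2) =
      2 * y * (∫ g : ℝ, (2 * (y + Complex.I * g)) ^ n * Complex.exp (-(g : ℂ) ^ 2)) -
      2 * (n : ℂ) *
        ∫ g : ℝ, (2 * (y + Complex.I * g)) ^ (n - 1) * Complex.exp (-(g : ℂ) ^ 2) := by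
  have hI := Complex.I_sq
  have i0 := integrable_moment n y
  have i1 := integrable_moment (n + 1) y
  have i2 := integrable_moment (n - 1) y
  have hder : ∀ g : ℝ, HasDerivAt
      (fun g : ℝ => Complex.I * ((2 * (y + Complex.I * g)) ^ n * Complex.exp (-(g : ℂ) ^ 2)))
      (2 * y * ((2 * (y + Complex.I * g)) ^ n * Complex.exp (-(g : ℂ) ^ 2))
        - 2 * (n : ℂ) * ((2 * (y + Complex.I * g)) ^ (n - 1) * Complex.exp (-(g : ℂ) ^ 2))
        - (2 * (y + Complex.I * g)) ^ (n + 1) * Complex.exp (-(g : ℂ) ^ 2)) g := by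
    intro g
    have hg : HasDerivAt (fun g : ℝ => (g : ℂ)) 1 g := Complex.ofRealCLM.hasDerivAt
    have h1 := ((((hg.const_mul Complex.I).const_add y).const_mul 2).pow n)
    have h2' : HasDerivAt (fun g : ℝ => -(g : ℂ) ^ 2) (-(2 * (g : ℂ))) g := by
      simpa using (hg.fun_pow 2).fun_neg
    have h2 := h2'.cexp
    have h3 := (h1.mul h2).const_mul Complex.I
    convert! h3 using 1
    simp only [Pi.pow_apply]
    rw [pow_succ (2 * (y + Complex.I * (g : ℂ))) n]
    linear_combination (-2 * (n : ℂ) * (2 * (y + Complex.I * g)) ^ (n - 1) *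
      Complex.exp (-(g : ℂ) ^ 2)) * hI
  have i02 := (i0.const_mul (2 * y)).sub (i2.const_mul (2 * (n : ℂ)))
  simp only [Pi.sub_def] at i02
  have h := MeasureTheory.integral_eq_zero_of_hasDerivAt_of_integrable hder
    (i02.sub i1) (i0.const_mul _)
  rw [MeasureTheory.integral_sub i02 i1,
    MeasureTheory.integral_sub (i0.const_mul _) (i2.const_mul _),
    MeasureTheory.integral_const_mul, MeasureTheory.integral_const_mul] at h
  exact (sub_eq_zero.mp h).symm

lemma moment_eq (n : ℕ) (y : ℂ) :
    ∫ g : ℝ, (2 * (y + Complex.I * g)) ^ n * Complex.exp (-(g : ℂ) ^ 2) =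
      (π : ℂ) ^ (1 / 2 : ℂ) * aeval y (physHermite n) := by
  induction n using Nat.strong_induction_on with
  | _ n ih =>
    cases n with
    | zero =>
      have := integral_cexp_quadratic (b := -1) (by simp) 0 0
      simpa [physHermite] using this
    | succ k =>
      rw [moment_rec, physHermite_rec, ih k (by omega), ih (k - 1) (by omega)]
      ring

lemma quad_term (u : ℝ) (hu0 : 0 < u) (x y : ℂ) (p : ℝ × ℝ) :
    Real.exp (2 * u * (‖x‖ + |p.1|) * (‖y‖ + |p.2|)) * (Real.exp (-p.1 ^ 2) * Real.exp (-p.2 ^ 2))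
      ≤ Real.exp (-(1 - u) * p.1 ^ 2 + 2 * u * ‖x‖ * |p.1| + u * ‖x‖ ^ 2) *
        Real.exp (-(1 - u) * p.2 ^ 2 + 2 * u * ‖y‖ * |p.2| + u * ‖y‖ ^ 2) := by
  rw [← Real.exp_add, ← Real.exp_add, ← Real.exp_add, Real.exp_le_exp]
  have h1 := sq_abs p.1
  have h2 := sq_abs p.2
  have := mul_nonneg hu0.le (sq_nonneg ((‖x‖ + |p.1|) - (‖y‖ + |p.2|)))
  nlinarith

lemma mehler_dom (u : ℝ) (hu0 : 0 < u) (hu1 : u < 1) (x y : ℂ) :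
    MeasureTheory.Integrable (fun p : ℝ × ℝ =>
      Real.exp (2 * u * (‖x‖ + |p.1|) * (‖y‖ + |p.2|)) *
        (Real.exp (-p.1 ^ 2) * Real.exp (-p.2 ^ 2))) := by
  have := (integrable_exp_abs (-(1 - u)) (2 * u * ‖x‖) (u * ‖x‖ ^ 2) (by linarith)).mul_prod
    (integrable_exp_abs (-(1 - u)) (2 * u * ‖y‖) (u * ‖y‖ ^ 2) (by linarith))
  refine MeasureTheory.Integrable.mono' this (by fun_prop) (Filter.Eventually.of_forall fun p => ?_)
  rw [Real.norm_of_nonneg (by positivity)]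
  exact quad_term u hu0 x y p

lemma norm_gauss (p : ℝ × ℝ) :
    ‖Complex.exp (-(p.1 : ℂ) ^ 2) * Complex.exp (-(p.2 : ℂ) ^ 2)‖ =
      Real.exp (-p.1 ^ 2) * Real.exp (-p.2 ^ 2) := by
  rw [norm_mul, Complex.norm_exp, Complex.norm_exp]
  norm_cast

lemma norm_kernel_le (u : ℝ) (hu0 : 0 < u) (x y : ℂ) (p : ℝ × ℝ) :
    ‖2 * (u : ℂ) * (x + Complex.I * p.1) * (y + Complex.I * p.2)‖ ≤
      2 * u * (‖x‖ + |p.1|) * (‖y‖ + |p.2|) := by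
  rw [norm_mul, norm_mul, norm_mul, Complex.norm_real, Real.norm_of_nonneg hu0.le]
  have h1 := norm_add_I_mul_le x p.1
  have h2 := norm_add_I_mul_le y p.2
  simp only [Complex.norm_ofNat]
  gcongr

lemma mehler_sum (u : ℝ) (hu0 : 0 < u) (hu1 : u < 1) (x y : ℂ) :
    HasSum (fun n : ℕ => ∫ p : ℝ × ℝ,
      ((2 * (u : ℂ) * (x + Complex.I * p.1) * (y + Complex.I * p.2)) ^ n / n.factorial) *
        (Complex.exp (-(p.1 : ℂ) ^ 2) * Complex.exp (-(p.2 : ℂ) ^ 2)))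
      (∫ p : ℝ × ℝ, Complex.exp (2 * (u : ℂ) * (x + Complex.I * p.1) * (y + Complex.I * p.2)) *
        (Complex.exp (-(p.1 : ℂ) ^ 2) * Complex.exp (-(p.2 : ℂ) ^ 2))) := by
  have hs (p : ℝ × ℝ) : HasSum (fun n : ℕ =>
      ((2 * u * (‖x‖ + |p.1|) * (‖y‖ + |p.2|)) ^ n / n.factorial) *
        (Real.exp (-p.1 ^ 2) * Real.exp (-p.2 ^ 2)))
      (Real.exp (2 * u * (‖x‖ + |p.1|) * (‖y‖ + |p.2|)) *
        (Real.exp (-p.1 ^ 2) * Real.exp (-p.2 ^ 2))) := by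
    have := NormedSpace.expSeries_div_hasSum_exp (𝔸 := ℝ) (2 * u * (‖x‖ + |p.1|) * (‖y‖ + |p.2|))
    rw [← Real.exp_eq_exp_ℝ] at this
    exact this.mul_right _
  refine MeasureTheory.hasSum_integral_of_dominated_convergence
    (fun n p => ((2 * u * (‖x‖ + |p.1|) * (‖y‖ + |p.2|)) ^ n / n.factorial) *
        (Real.exp (-p.1 ^ 2) * Real.exp (-p.2 ^ 2))) (fun n => by fun_prop) ?_ ?_ ?_ ?_
  · refine fun n => Filter.Eventually.of_forall fun p => ?_
    rw [norm_mul, norm_gauss, norm_div, norm_pow, Complex.norm_natCast]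
    have := norm_kernel_le u hu0 x y p
    gcongr
  · exact Filter.Eventually.of_forall fun p => (hs p).summable
  · simp_rw [fun p => (hs p).tsum_eq]
    exact mehler_dom u hu0 hu1 x y
  · refine Filter.Eventually.of_forall fun p => ?_
    have := NormedSpace.expSeries_div_hasSum_exp (𝔸 := ℂ)
      (2 * (u : ℂ) * (x + Complex.I * p.1) * (y + Complex.I * p.2))
    rw [← Complex.exp_eq_exp_ℂ] at this
    exact this.mul_right _

lemma sqrt_pi_mul : (π : ℂ) ^ (1 / 2 : ℂ) * (π : ℂ) ^ (1 / 2 : ℂ) = π := by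
  rw [← Complex.cpow_add _ _ (by exact_mod_cast Real.pi_ne_zero)]
  norm_num

lemma mehler_term (u : ℝ) (x y : ℂ) (n : ℕ) :
    ∫ p : ℝ × ℝ,
      ((2 * (u : ℂ) * (x + Complex.I * p.1) * (y + Complex.I * p.2)) ^ n / n.factorial) *
        (Complex.exp (-(p.1 : ℂ) ^ 2) * Complex.exp (-(p.2 : ℂ) ^ 2)) =
      π * (((u : ℂ) / 2) ^ n / n.factorial * aeval x (physHermite n) *
        aeval y (physHermite n)) := by
  have h := MeasureTheory.integral_prod_mul (μ := MeasureTheory.volume)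
    (ν := MeasureTheory.volume)
    (fun g : ℝ => (2 * (x + Complex.I * g)) ^ n * Complex.exp (-(g : ℂ) ^ 2))
    (fun g : ℝ => (2 * (y + Complex.I * g)) ^ n * Complex.exp (-(g : ℂ) ^ 2))
  rw [moment_eq, moment_eq] at h
  have h2 : ∀ p : ℝ × ℝ,
      ((2 * (u : ℂ) * (x + Complex.I * p.1) * (y + Complex.I * p.2)) ^ n / n.factorial) *
        (Complex.exp (-(p.1 : ℂ) ^ 2) * Complex.exp (-(p.2 : ℂ) ^ 2)) =
      (((u : ℂ) / 2) ^ n / n.factorial) *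
      (((2 * (x + Complex.I * p.1)) ^ n * Complex.exp (-(p.1 : ℂ) ^ 2)) *
      ((2 * (y + Complex.I * p.2)) ^ n * Complex.exp (-(p.2 : ℂ) ^ 2))) := by
    intro p
    have : (2 * (u : ℂ) * (x + Complex.I * p.1) * (y + Complex.I * p.2)) =
      ((u : ℂ) / 2) * (2 * (x + Complex.I * p.1)) * (2 * (y + Complex.I * p.2)) := by ring
    rw [this, mul_pow, mul_pow]
    ring
  simp_rw [h2]
  rw [MeasureTheory.integral_const_mul, MeasureTheory.Measure.volume_eq_prod, h]
  linear_combination (((u : ℂ) / 2) ^ n / n.factorial * aeval x (physHermite n) *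
        aeval y (physHermite n)) * sqrt_pi_mul

lemma mehler_integral (u : ℝ) (hu0 : 0 < u) (hu1 : u < 1) (x y : ℂ) :
    ∫ p : ℝ × ℝ, Complex.exp (2 * (u : ℂ) * (x + Complex.I * p.1) * (y + Complex.I * p.2)) *
        (Complex.exp (-(p.1 : ℂ) ^ 2) * Complex.exp (-(p.2 : ℂ) ^ 2)) =
      (π : ℂ) ^ (1 / 2 : ℂ) * ((π : ℂ) / ((1 - u ^ 2 : ℝ) : ℂ)) ^ (1 / 2 : ℂ) *
        Complex.exp ((2 * u * x * y - u ^ 2 * (x ^ 2 + y ^ 2)) / ((1 - u ^ 2 : ℝ) : ℂ)) := by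
  have hI := Complex.I_sq
  have hu2 : 0 < 1 - u ^ 2 := by nlinarith
  have hu3 : (1 - (u : ℂ) ^ 2) ≠ 0 := by exact_mod_cast hu2.ne'
  have hint : MeasureTheory.Integrable (fun p : ℝ × ℝ =>
      Complex.exp (2 * (u : ℂ) * (x + Complex.I * p.1) * (y + Complex.I * p.2)) *
        (Complex.exp (-(p.1 : ℂ) ^ 2) * Complex.exp (-(p.2 : ℂ) ^ 2))) := by
    refine (mehler_dom u hu0 hu1 x y).mono' (by fun_prop)
      (Filter.Eventually.of_forall fun p => ?_)
    rw [norm_mul, norm_gauss]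
    gcongr
    rw [Complex.norm_exp, Real.exp_le_exp]
    exact (Complex.re_le_norm _).trans (norm_kernel_le u hu0 x y p)
  rw [MeasureTheory.Measure.volume_eq_prod] at hint ⊢
  rw [MeasureTheory.integral_prod _ hint]
  have inner (g : ℝ) : ∫ h : ℝ,
      Complex.exp (2 * (u : ℂ) * (x + Complex.I * g) * (y + Complex.I * h)) *
        (Complex.exp (-(g : ℂ) ^ 2) * Complex.exp (-(h : ℂ) ^ 2)) =
      (π : ℂ) ^ (1 / 2 : ℂ) * Complex.exp (-((1 - u ^ 2 : ℝ) : ℂ) * g ^ 2 +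
        (2 * u * Complex.I * (y - u * x)) * g + (2 * u * x * y - u ^ 2 * x ^ 2)) := by
    have := integral_cexp_quadratic (b := -1) (by simp)
      (2 * u * Complex.I * (x + Complex.I * g)) (2 * u * (x + Complex.I * g) * y - g ^ 2)
    rw [neg_neg, div_one] at this
    refine Eq.trans (MeasureTheory.integral_congr_ae (Filter.Eventually.of_forall fun h => ?_))
      (this.trans ?_)
    · beta_reduce
      rw [← Complex.exp_add, ← Complex.exp_add]
      congr 1
      ring
    · congr 2
      push_cast
      linear_combination ((u : ℂ) ^ 2 * (x + Complex.I * g) ^ 2 - (u : ℂ) ^ 2 * g ^ 2) * hI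
  simp_rw [inner]
  rw [MeasureTheory.integral_const_mul, integral_cexp_quadratic
    (by rw [Complex.neg_re, Complex.ofReal_re]; linarith), neg_neg, ← mul_assoc]
  congr 2
  push_cast
  field_simp
  linear_combination (4 * (u : ℂ) ^ 2 * (y - u * x) ^ 2) * hI

lemma mehler (u : ℝ) (hu0 : 0 < u) (hu1 : u < 1) (x y : ℂ) :
    HasSum (fun n : ℕ => ((u : ℂ) / 2) ^ n / n.factorial * aeval x (physHermite n) *
        aeval y (physHermite n))
      (((√(1 - u ^ 2))⁻¹ : ℝ) *
        Complex.exp ((2 * u * x * y - u ^ 2 * (x ^ 2 + y ^ 2)) / ((1 - u ^ 2 : ℝ) : ℂ))) := by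
  have hu2 : 0 < 1 - u ^ 2 := by nlinarith
  have h := mehler_sum u hu0 hu1 x y
  rw [mehler_integral u hu0 hu1] at h
  simp_rw [mehler_term] at h
  have hpi : (π : ℂ) ≠ 0 := by exact_mod_cast Real.pi_ne_zero
  have h' := h.mul_left ((π : ℂ)⁻¹)
  simp_rw [inv_mul_cancel_left₀ hpi] at h'
  convert! h' using 1
  rw [← mul_assoc]
  congr 1
  have e (a : ℝ) (ha : 0 ≤ a) : (a : ℂ) ^ (1 / 2 : ℂ) = ((√a : ℝ) : ℂ) := by
    rw [Real.sqrt_eq_rpow, Complex.ofReal_cpow ha]; norm_num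
  rw [← Complex.ofReal_div, e π Real.pi_pos.le, e (π / (1 - u ^ 2)) (by positivity), Real.sqrt_div Real.pi_pos.le]
  norm_cast
  have := Real.mul_self_sqrt Real.pi_pos.le
  have := Real.sqrt_pos.mpr hu2
  field_simp
  nlinarith

lemma aeval_conj_real (p : ℝ[X]) (w : ℂ) :
    (starRingEnd ℂ) (aeval w p) = aeval ((starRingEnd ℂ) w) p :=
  (Polynomial.aeval_conj p w).symm

theorem hermite_kernel_sum (s : ℝ) (hs0 : 0 < s) (hs1 : s < 1) (z w : ℂ) :
    HasSum
      (fun n : ℕ => ((bn s n : ℂ))⁻¹ * Polynomial.aeval z (physHermite n) *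
        (starRingEnd ℂ) (Polynomial.aeval w (physHermite n)))
      (((1 - s ^ 2) / (2 * Real.pi * s) : ℝ) *
        Complex.exp (-(((s - 1) ^ 2 / (4 * s) : ℝ)) * (z ^ 2 + (starRingEnd ℂ) w ^ 2) +
          (((1 - s ^ 2) / (2 * s) : ℝ)) * (z * (starRingEnd ℂ) w))) := by
  have h1s : 0 < 1 - s := by linarith
  have hss : 0 < √s := Real.sqrt_pos.mpr hs0
  have hsq : √s * √s = s := Real.mul_self_sqrt hs0.le
  obtain ⟨u, hu⟩ : ∃ u, u = (1 - s) / (1 + s) := ⟨_, rfl⟩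
  have hu0 : 0 < u := by rw [hu]; positivity
  have hu1 : u < 1 := by rw [hu, div_lt_one (by positivity)]; linarith
  have hu2 : 1 - u ^ 2 = 4 * s / (1 + s) ^ 2 := by rw [hu]; field_simp; ring
  have hsqrt : √(1 - u ^ 2) = 2 * √s / (1 + s) := by
    rw [hu2, Real.sqrt_eq_iff_mul_self_eq (by positivity) (by positivity)]
    field_simp
    nlinarith
  have h := (mehler u hu0 hu1 z ((starRingEnd ℂ) w)).mul_left
    (((1 - s) / (π * √s) : ℝ) : ℂ)
  convert! h using 1
  · ext n
    rw [aeval_conj_real, ← mul_assoc, ← mul_assoc]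
    congr 2
    have : (bn s n)⁻¹ = (1 - s) / (π * √s) * ((u / 2) ^ n / n.factorial) := by
      have : u / 2 = (2 * (1 + s) / (1 - s))⁻¹ := by rw [hu]; field_simp
      rw [this, bn, inv_pow]
      field_simp
    rw [← Complex.ofReal_inv, this]
    push_cast
    rfl
  · rw [← mul_assoc (((1 - s) / (π * √s) : ℝ) : ℂ), ← Complex.ofReal_mul]
    congr 1
    · congr 1
      rw [hsqrt]
      field_simp
      linear_combination (1 - s ^ 2) * hsq
    · congr 1
      rw [hu2, hu]
      have a1 : (s : ℂ) ≠ 0 := by exact_mod_cast hs0.ne'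
      have a2 : (1 + s : ℂ) ≠ 0 := by
        have : (1 + s) ≠ 0 := by positivity
        exact_mod_cast this
      push_cast
      field_simp
      ring
end
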